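/- arXiv:2311.13375 — 11 statements merged into one kernel-verified Lean document; each statement's English description precedes it below -/
import Mathlib

section
/- Let p be an odd prime and let g ∈ ZMod p with g ≠ 0 and g ≠ -1. Suppose the truncated first-kind rogue sequence of g exhausts the rogue set A_1^p, i.e. for every x ∈ ZMod p with x ≠ 0 and x ≠ -1 there exists n ≥ 0 such that x = 2^n(g+1) - 1 and 2^m(g+1) - 1 ≠ 0 for all m < n. Then g = 1. -/
/-- If the truncated first-kind rogue sequence of `g` exhausts the rogue set
`A_1^p = {x : ZMod p | x ≠ 0, x ≠ -1}`, then `g = 1`. -/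
theorem stmt_2 (p : ℕ) (hp : p.Prime) (hp2 : p ≠ 2) (g : ZMod p)
    (hg0 : g ≠ 0) (hg1 : g ≠ -1)
    (hgen : ∀ x : ZMod p, x ≠ 0 → x ≠ -1 →
      ∃ n : ℕ, x = 2 ^ n * (g + 1) - 1 ∧ ∀ m < n, (2 : ZMod p) ^ m * (g + 1) - 1 ≠ 0) :
    g = 1 := by
  haveI := Fact.mk hp
  have h2 : (2 : ZMod p) ≠ 0 := by
    intro h
    have h' : ((2 : ℕ) : ZMod p) = 0 := by exact_mod_cast h
    rw [ZMod.natCast_eq_zero_iff] at h'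
    exact hp2 ((Nat.prime_dvd_prime_iff_eq hp Nat.prime_two).1 h')
  -- the rogue element `1` can only be reached at index `0`
  obtain ⟨n, hn, hm⟩ := hgen 1 one_ne_zero (by
    intro h
    apply h2
    linear_combination h)
  cases n with
  | zero => linear_combination -hn
  | succ k =>
    exfalso
    apply hm k (Nat.lt_succ_self k)
    apply mul_left_cancel₀ h2
    rw [pow_succ] at hn
    linear_combination -hn
end

section
/- Let p be an odd prime. Then there exists g ∈ ZMod p with g ≠ 0, g ≠ -1 and 2^n(g+1) ≠ 1 for all n ≥ 0 (i.e. p is a rogue prime of the first kind) if and only if 2 is not a primitive root modulo p. -/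
/-- `p` is a rogue prime of the first kind iff `2` is not a primitive root modulo `p`. -/
theorem stmt_3 (p : ℕ) (hp : p.Prime) (hp2 : p ≠ 2) :
    (∃ g : ZMod p, g ≠ 0 ∧ g ≠ -1 ∧ ∀ n : ℕ, (2 : ZMod p) ^ n * (g + 1) ≠ 1) ↔
      orderOf (2 : ZMod p) ≠ p - 1 := by
  haveI : Fact p.Prime := ⟨hp⟩
  have h2 : (2 : ZMod p) ≠ 0 := by
    intro h
    have h' : ((2 : ℕ) : ZMod p) = 0 := by exact_mod_cast h
    rw [ZMod.natCast_eq_zero_iff] at h'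
    exact hp2 ((Nat.prime_dvd_prime_iff_eq hp Nat.prime_two).1 h')
  set u : (ZMod p)ˣ := Units.mk0 2 h2 with hu
  have hu2 : (u : ZMod p) = 2 := rfl
  have ho : orderOf (2 : ZMod p) = orderOf u := by rw [← hu2, orderOf_units]
  have hc : Nat.card (ZMod p)ˣ = p - 1 := by
    rw [Nat.card_eq_fintype_card, ZMod.card_units]
  rw [ho, ← hc]
  constructor
  · rintro ⟨g, -, hg1, hg⟩ h
    have hne : g + 1 ≠ 0 := fun h => hg1 (eq_neg_of_add_eq_zero_left h)
    have htop : Subgroup.zpowers u = ⊤ := by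
      apply Subgroup.eq_top_of_card_eq
      rw [Nat.card_zpowers, h]
    have hm : (Units.mk0 (g + 1) hne)⁻¹ ∈ Subgroup.zpowers u := by
      rw [htop]; trivial
    rw [← mem_powers_iff_mem_zpowers] at hm
    obtain ⟨n, hn⟩ := hm
    apply hg n
    have : u ^ n * Units.mk0 (g + 1) hne = 1 := by
      have hn' : u ^ n = (Units.mk0 (g + 1) hne)⁻¹ := hn
      rw [hn', inv_mul_cancel]
    simpa [hu2] using congrArg (Units.val) this
  · intro h
    by_contra hcon
    push Not at hcon
    apply h
    apply orderOf_eq_card_of_forall_mem_zpowers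
    intro v
    by_cases hv : v = 1
    · rw [hv]; exact one_mem _
    · obtain ⟨n, hn⟩ := hcon ((v : ZMod p) - 1)
        (fun h => hv (Units.ext (by simpa using sub_eq_zero.1 h)))
        (fun h => v.ne_zero (by linear_combination h))
      have : u ^ n * v = 1 := by
        apply Units.ext
        simpa [hu2] using hn
      rw [← inv_mem_iff, ← eq_inv_of_mul_eq_one_left this]
      exact Subgroup.npow_mem_zpowers u n
end

section
/- Let p be an odd prime. Then there exists g ∈ ZMod p with g ≠ 0, g ≠ 1 and 2^n(g-1) ≠ -1 for all n ≥ 0 (i.e. p is a rogue prime of the second kind) if and only if 2 is not a primitive root modulo p. -/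
/-- `p` is a rogue prime of the second kind iff `2` is not a primitive root modulo `p`. -/
theorem stmt_4 (p : ℕ) (hp : p.Prime) (hp2 : p ≠ 2) :
    (∃ g : ZMod p, g ≠ 0 ∧ g ≠ 1 ∧ ∀ n : ℕ, (2 : ZMod p) ^ n * (g - 1) ≠ -1) ↔
      orderOf (2 : ZMod p) ≠ p - 1 := by
  have : Fact p.Prime := ⟨hp⟩
  have h2 : (2 : ZMod p) ≠ 0 := by
    intro h
    have h' : ((2 : ℕ) : ZMod p) = 0 := by exact_mod_cast h
    rw [ZMod.natCast_eq_zero_iff] at h'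
    exact hp2 ((Nat.prime_dvd_prime_iff_eq hp Nat.prime_two).1 h')
  let t : (ZMod p)ˣ := Units.mk0 2 h2
  have ht : (t : ZMod p) = 2 := rfl
  have hcard : Nat.card (ZMod p)ˣ = p - 1 := by
    rw [Nat.card_eq_fintype_card, ZMod.card_units]
  rw [← not_iff_not, not_not, ← ht, orderOf_units, ← hcard]
  constructor
  · intro h
    apply orderOf_eq_card_of_forall_mem_zpowers
    intro u
    by_contra hu
    apply h
    have key : ∀ n : ℕ, (t : ZMod p) ^ n * (1 - ((u⁻¹ : (ZMod p)ˣ) : ZMod p) - 1) ≠ -1 := by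
      intro n hn
      apply hu
      refine ⟨n, ?_⟩
      have h1 : ((t ^ n * u⁻¹ : (ZMod p)ˣ) : ZMod p) = ((1 : (ZMod p)ˣ) : ZMod p) := by
        rw [Units.val_mul, Units.val_pow_eq_pow_val, Units.val_one]
        linear_combination -hn
      have h3 := Units.ext h1
      simpa using mul_inv_eq_one.1 h3
    refine ⟨1 - ((u⁻¹ : (ZMod p)ˣ) : ZMod p), ?_, ?_, key⟩
    · intro h0
      apply key 0
      rw [h0]
      simp
    · intro h0
      apply (u⁻¹).ne_zero
      linear_combination -h0
  · rintro h ⟨g, -, hg1, hg⟩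
    have htop : Subgroup.zpowers t = ⊤ :=
      Subgroup.eq_top_of_card_eq _ (by rw [Nat.card_zpowers, h])
    let v : (ZMod p)ˣ := Units.mk0 (g - 1) (sub_ne_zero.2 hg1)
    have hm : -v⁻¹ ∈ Subgroup.zpowers t := by rw [htop]; trivial
    rw [← mem_powers_iff_mem_zpowers] at hm
    obtain ⟨n, hn⟩ := hm
    apply hg n
    have h1 : t ^ n * v = -1 := by
      have hn' : t ^ n = -v⁻¹ := hn
      rw [hn']; simp
    have := congrArg (fun x : (ZMod p)ˣ => (x : ZMod p)) h1
    simpa [v] using this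
end

section
/- Let p and q be odd primes with q < p, suppose 2 is a primitive root modulo q, and suppose p ≢ -1 (mod q). Then there exists m with 1 ≤ m ≤ q - 2 such that p ≡ 2^m - 1 (mod q), and for any such m: q divides 2^{q-1-m}(p+1) - 1, and the Cunningham chain of the first kind with base p has length at most q - 1 - m; in particular its length is strictly less than p - 1. (Here 'length at most L' means: for every k such that 2^j(p+1) - 1 is prime for all 0 ≤ j < k, one has k ≤ L.) -/
/-- If `q < p` are odd primes, `2` is a primitive root modulo `q`, and `p ≢ -1 (mod q)`,
then `p ≡ 2^m - 1 (mod q)` for some `1 ≤ m ≤ q - 2`, and for any such `m` the number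
`2^(q-1-m)(p+1) - 1` is divisible by `q`, the Cunningham chain of the first kind with
base `p` has length at most `q - 1 - m`, and `q - 1 - m < p - 1`. -/
theorem stmt_8 (p q : ℕ) (hp : p.Prime) (hq : q.Prime) (hp2 : p ≠ 2) (hq2 : q ≠ 2)
    (hqp : q < p) (hroot : orderOf (2 : ZMod q) = q - 1) (hne : (p : ZMod q) ≠ -1) :
    (∃ m : ℕ, 1 ≤ m ∧ m ≤ q - 2 ∧ (p : ZMod q) = 2 ^ m - 1) ∧
    (∀ m : ℕ, 1 ≤ m → m ≤ q - 2 → (p : ZMod q) = 2 ^ m - 1 →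
      q ∣ 2 ^ (q - 1 - m) * (p + 1) - 1 ∧
      (∀ k : ℕ, (∀ j < k, Nat.Prime (2 ^ j * (p + 1) - 1)) → k ≤ q - 1 - m) ∧
      q - 1 - m < p - 1) := by
  haveI : Fact q.Prime := ⟨hq⟩
  have hprim : IsPrimitiveRoot (2 : ZMod q) (q - 1) := hroot ▸ IsPrimitiveRoot.orderOf _
  have hq3 : 2 < q := lt_of_le_of_ne hq.two_le (Ne.symm hq2)
  haveI : NeZero (q - 1) := ⟨by omega⟩
  constructor
  · have hx : (p : ZMod q) + 1 ≠ 0 := fun h => hne (eq_neg_of_add_eq_zero_left h)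
    obtain ⟨m, hm, hpow⟩ := hprim.eq_pow_of_pow_eq_one (ZMod.pow_card_sub_one_eq_one hx)
    refine ⟨m, ?_, by omega, by rw [hpow]; ring⟩
    rcases Nat.eq_zero_or_pos m with h0 | h0
    · exfalso
      subst h0
      have h1 : (p : ZMod q) = 0 := by
        rw [pow_zero] at hpow
        exact left_eq_add.mp (hpow.trans (add_comm _ _))
      rw [ZMod.natCast_eq_zero_iff] at h1
      have := (Nat.prime_dvd_prime_iff_eq hq hp).mp h1
      omega
    · exact h0
  · intro m hm1 hm2 hpm
    have hge : p + 1 ≤ 2 ^ (q - 1 - m) * (p + 1) :=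
      Nat.le_mul_of_pos_left _ (by positivity)
    have hdvd : q ∣ 2 ^ (q - 1 - m) * (p + 1) - 1 := by
      rw [← ZMod.natCast_eq_zero_iff, Nat.cast_sub (by omega)]
      push_cast
      rw [hpm, sub_add_cancel, ← pow_add, show q - 1 - m + m = q - 1 by omega,
        hprim.pow_eq_one, sub_self]
    refine ⟨hdvd, ?_, by omega⟩
    intro k hk
    by_contra hlt
    have := (Nat.prime_dvd_prime_iff_eq hq (hk _ (not_le.mp hlt))).mp hdvd
    omega
end

section
/- Let p and q be primes with 2 < q < p, let d be the multiplicative order of 2 modulo q, and suppose p ≡ 2^m - 1 (mod q) for some m with 1 ≤ m < d. Then q divides 2^{d-m}(p+1) - 1, and the Cunningham chain of the first kind with base p has length at most d - m; that is, for every k such that 2^j(p+1) - 1 is prime for all 0 ≤ j < k, one has k ≤ d - m. -/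
/-- If `2 < q < p` are primes, `d` is the multiplicative order of `2` mod `q`, and
`p ≡ 2^m - 1 (mod q)` with `1 ≤ m < d`, then `q ∣ 2^(d-m)(p+1) - 1` and the Cunningham
chain of the first kind with base `p` has length at most `d - m`. -/
theorem stmt_9 (p q : ℕ) (hp : p.Prime) (hq : q.Prime) (hq2 : 2 < q) (hqp : q < p)
    (d : ℕ) (hd : d = orderOf (2 : ZMod q))
    (m : ℕ) (hm1 : 1 ≤ m) (hmd : m < d) (hcong : (p : ZMod q) = 2 ^ m - 1) :
    q ∣ 2 ^ (d - m) * (p + 1) - 1 ∧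
    ∀ k : ℕ, (∀ j < k, Nat.Prime (2 ^ j * (p + 1) - 1)) → k ≤ d - m := by
  have h1 : 1 ≤ 2 ^ (d - m) := Nat.one_le_two_pow
  have h2 : p + 1 ≤ 2 ^ (d - m) * (p + 1) := Nat.le_mul_of_pos_left _ h1
  have hdvd : q ∣ 2 ^ (d - m) * (p + 1) - 1 := by
    rw [← ZMod.natCast_eq_zero_iff, Nat.cast_sub (by omega)]
    push_cast
    rw [hcong, sub_add_cancel, ← pow_add, Nat.sub_add_cancel hmd.le, hd, pow_orderOf_eq_one,
      sub_self]
  refine ⟨hdvd, fun k hk => ?_⟩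
  by_contra hlt
  have hpr := hk (d - m) (by omega)
  have := (Nat.prime_dvd_prime_iff_eq hq hpr).1 hdvd
  omega
end

section
/- Let p > 5 be prime. If p ≢ 4 (mod 5), then the Cunningham chain of the first kind with base p has length at most 4, i.e. there exists j with 1 ≤ j ≤ 4 such that 2^j(p+1) - 1 is not prime. If p ≢ 1 (mod 5), then the Cunningham chain of the second kind with base p has length at most 4, i.e. there exists j with 1 ≤ j ≤ 4 such that 2^j(p-1) + 1 is not prime. -/
/-- A number larger than `5` and divisible by `5` is not prime. -/
lemma not_prime_of_five (n : ℕ) (h : n % 5 = 0) (hn : 5 < n) : ¬ n.Prime := by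
  intro hp
  have h1 := (Nat.prime_dvd_prime_iff_eq Nat.prime_five hp).1 (Nat.dvd_of_mod_eq_zero h)
  omega

/-- For a prime `p > 5`: if `p ≢ 4 (mod 5)` then the Cunningham chain of the first kind
with base `p` has length at most `4`, and if `p ≢ 1 (mod 5)` then the Cunningham chain
of the second kind with base `p` has length at most `4`. -/
theorem stmt_10 (p : ℕ) (hp : p.Prime) (hp5 : 5 < p) :
    (p % 5 ≠ 4 → ∃ j : ℕ, 1 ≤ j ∧ j ≤ 4 ∧ ¬ Nat.Prime (2 ^ j * (p + 1) - 1)) ∧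
    (p % 5 ≠ 1 → ∃ j : ℕ, 1 ≤ j ∧ j ≤ 4 ∧ ¬ Nat.Prime (2 ^ j * (p - 1) + 1)) := by
  have h0 : p % 5 ≠ 0 := fun h => not_prime_of_five p h hp5 hp
  constructor
  · intro h4
    have h : p % 5 = 1 ∨ p % 5 = 2 ∨ p % 5 = 3 := by omega
    rcases h with h | h | h
    · exact ⟨3, by norm_num, by norm_num, not_prime_of_five _ (by omega) (by omega)⟩
    · exact ⟨1, by norm_num, by norm_num, not_prime_of_five _ (by omega) (by omega)⟩
    · exact ⟨2, by norm_num, by norm_num, not_prime_of_five _ (by omega) (by omega)⟩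
  · intro h1
    have h : p % 5 = 2 ∨ p % 5 = 3 ∨ p % 5 = 4 := by omega
    rcases h with h | h | h
    · exact ⟨2, by norm_num, by norm_num, not_prime_of_five _ (by omega) (by omega)⟩
    · exact ⟨1, by norm_num, by norm_num, not_prime_of_five _ (by omega) (by omega)⟩
    · exact ⟨3, by norm_num, by norm_num, not_prime_of_five _ (by omega) (by omega)⟩
end

section
/- Let p be an odd prime and let A = {x ∈ ZMod p : x ≠ 0, x ≠ -1}. For a, b ∈ A define Mem(a, b) to hold if there exists n ≥ 0 such that a = 2^n(b+1) - 1 in ZMod p and 2^m(b+1) - 1 ≠ 0 for all m < n, and define R(a, b) to hold if Mem(a, b) or Mem(b, a). Then R is an equivalence relation on A: it is reflexive, symmetric, and transitive. -/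
/-- The relation `R` (membership of one element in the truncated first-kind rogue
sequence of the other) is an equivalence relation on the rogue set
`A_1^p = {x : ZMod p | x ≠ 0, x ≠ -1}`. -/
theorem stmt_11 (p : ℕ) (hp : p.Prime) (hp2 : p ≠ 2) :
    let A : Set (ZMod p) := {x : ZMod p | x ≠ 0 ∧ x ≠ -1}
    let Mem : ZMod p → ZMod p → Prop := fun a b =>
      ∃ n : ℕ, a = 2 ^ n * (b + 1) - 1 ∧ ∀ m < n, (2 : ZMod p) ^ m * (b + 1) - 1 ≠ 0
    let R : ZMod p → ZMod p → Prop := fun a b => Mem a b ∨ Mem b a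
    (∀ a ∈ A, R a a) ∧
    (∀ a ∈ A, ∀ b ∈ A, R a b → R b a) ∧
    (∀ a ∈ A, ∀ b ∈ A, ∀ c ∈ A, R a b → R b c → R a c) := by
  intro A Mem R
  haveI : Fact p.Prime := ⟨hp⟩
  have h2 : (2 : ZMod p) ≠ 0 := by
    intro h
    have h' : ((2 : ℕ) : ZMod p) = 0 := by exact_mod_cast h
    rw [ZMod.natCast_eq_zero_iff] at h'
    exact hp2 ((Nat.prime_dvd_prime_iff_eq hp Nat.prime_two).1 h')
  have trans : ∀ a b c, Mem a b → Mem b c → Mem a c := by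
    rintro a b c ⟨n, rfl, h1⟩ ⟨k, rfl, h3⟩
    refine ⟨n + k, by ring, fun m hm => ?_⟩
    rcases lt_or_ge m k with h | h
    · exact h3 m h
    · obtain ⟨d, rfl⟩ := Nat.exists_eq_add_of_le h
      have := h1 d (by omega)
      intro h0
      apply this
      rw [← h0]; ring
  -- two members of the same sequence
  have up : ∀ b n d, (∀ m < n + d, (2 : ZMod p) ^ m * (b + 1) - 1 ≠ 0) →
      Mem (2 ^ (n + d) * (b + 1) - 1) (2 ^ n * (b + 1) - 1) := by
    intro b n d h
    refine ⟨d, by ring, fun m hm h0 => h (n + m) (by omega) ?_⟩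
    rw [← h0]; ring
  -- two sequences with a common member
  have down : ∀ a c n d, (2 : ZMod p) ^ n * (c + 1) - 1 = 2 ^ (n + d) * (a + 1) - 1 →
      (∀ m < n + d, (2 : ZMod p) ^ m * (a + 1) - 1 ≠ 0) → Mem c a := by
    intro a c n d he h
    refine ⟨d, ?_, fun m hm => h m (by omega)⟩
    have : c + 1 = 2 ^ d * (a + 1) := by
      apply mul_left_cancel₀ (pow_ne_zero n h2)
      rw [pow_add] at he
      linear_combination he
    linear_combination this
  refine ⟨fun a _ => Or.inl ⟨0, by ring, by simp⟩, fun a _ b _ h => h.symm, ?_⟩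
  rintro a - b - c - (h | h) (h' | h')
  · exact Or.inl (trans _ _ _ h h')
  · obtain ⟨n, rfl, hn⟩ := h
    obtain ⟨k, rfl, hk⟩ := h'
    rcases le_total n k with hl | hl
    · obtain ⟨d, rfl⟩ := Nat.exists_eq_add_of_le hl
      exact Or.inr (up b n d hk)
    · obtain ⟨d, rfl⟩ := Nat.exists_eq_add_of_le hl
      exact Or.inl (up b k d hn)
  · obtain ⟨n, e1, hn⟩ := h
    obtain ⟨k, e2, hk⟩ := h'
    rcases le_total n k with hl | hl
    · obtain ⟨d, rfl⟩ := Nat.exists_eq_add_of_le hl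
      exact Or.inl (down c a n d (e1.symm.trans e2) hk)
    · obtain ⟨d, rfl⟩ := Nat.exists_eq_add_of_le hl
      exact Or.inr (down a c k d (e2.symm.trans e1) hn)
  · exact Or.inr (trans _ _ _ h' h)
end

section
/- Let p be an odd prime such that 2 is not a primitive root modulo p, and let d be the multiplicative order of 2 modulo p. Then the set {x ∈ ZMod p : x ≠ 0 and x = 2^n - 1 for some n ≥ 1} (the underlying set of the rogue sequence of 1) has exactly d - 1 elements, and d - 1 ≤ (p-3)/2. -/
/-- For an odd prime `p` with `2` not a primitive root mod `p`, the underlying set of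
the rogue sequence of `1` has exactly `d - 1` elements, where `d` is the multiplicative
order of `2` mod `p`, and `d - 1 ≤ (p-3)/2`. -/
theorem stmt_13 (p : ℕ) (hp : p.Prime) (hp2 : p ≠ 2)
    (hroot : orderOf (2 : ZMod p) ≠ p - 1)
    (d : ℕ) (hd : d = orderOf (2 : ZMod p)) :
    {x : ZMod p | x ≠ 0 ∧ ∃ n : ℕ, 1 ≤ n ∧ x = 2 ^ n - 1}.ncard = d - 1 ∧
    d - 1 ≤ (p - 3) / 2 := by
  haveI : Fact p.Prime := ⟨hp⟩
  have hp3 : 3 ≤ p := by have := hp.two_le; omega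
  have h2 : (2 : ZMod p) ≠ 0 := by
    intro h
    have h' : ((2 : ℕ) : ZMod p) = 0 := by exact_mod_cast h
    rw [ZMod.natCast_eq_zero_iff] at h'
    have := Nat.le_of_dvd (by norm_num) h'
    omega
  have hdvd : d ∣ p - 1 := by
    rw [hd]
    exact orderOf_dvd_of_pow_eq_one (ZMod.pow_card_sub_one_eq_one h2)
  have hdpos : 0 < d := Nat.pos_of_dvd_of_pos hdvd (by omega)
  constructor
  · have hset : {x : ZMod p | x ≠ 0 ∧ ∃ n : ℕ, 1 ≤ n ∧ x = 2 ^ n - 1}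
        = (fun n : ℕ => (2 : ZMod p) ^ n - 1) '' (Finset.Ico 1 d : Set ℕ) := by
      ext x
      simp only [Set.mem_setOf_eq, Set.mem_image, Finset.coe_Ico, Set.mem_Ico]
      constructor
      · rintro ⟨hx, n, hn, rfl⟩
        have hmod : (2 : ZMod p) ^ (n % d) = 2 ^ n := by
          rw [hd]; exact pow_mod_orderOf _ _
        refine ⟨n % d, ⟨?_, Nat.mod_lt _ hdpos⟩, by rw [hmod]⟩
        by_contra hlt
        have h0 : n % d = 0 := by omega
        rw [h0, pow_zero] at hmod
        exact hx (by rw [← hmod, sub_self])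
      · rintro ⟨n, ⟨hn1, hn2⟩, rfl⟩
        refine ⟨?_, n, hn1, rfl⟩
        intro h
        have h1 := orderOf_dvd_of_pow_eq_one (sub_eq_zero.mp h)
        have := Nat.le_of_dvd (by omega) h1
        omega
    rw [hset, Set.ncard_image_of_injOn, Set.ncard_coe_finset, Nat.card_Ico]
    intro a ha b hb hab
    simp only [Finset.coe_Ico, Set.mem_Ico] at ha hb
    have hab' : (2 : ZMod p) ^ a = 2 ^ b := sub_left_injective hab
    exact pow_injOn_Iio_orderOf (by simp only [Set.mem_Iio]; omega)
      (by simp only [Set.mem_Iio]; omega) hab'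
  · obtain ⟨k, hk⟩ := hdvd
    have hk2 : 2 ≤ k := by
      by_contra hlt
      have : k = 0 ∨ k = 1 := by omega
      rcases this with rfl | rfl
      · omega
      · omega
    have : d * 2 ≤ d * k := Nat.mul_le_mul_left d hk2
    omega
end

section
/- Let p be an odd prime with 2 not a primitive root modulo p, let d be the multiplicative order of 2 modulo p, and let g ∈ ZMod p with g ≠ 0, g ≠ -1 and 2^n(g+1) ≠ 1 for all n ≥ 0 (so the rogue sequence of g is a rogue loop). Then the set {x ∈ ZMod p : x = 2^n(g+1) - 1 for some n ≥ 0} has exactly d elements; in particular every rogue loop has length at most (p-1)/2. -/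
/-- For an odd prime `p` with `2` not a primitive root mod `p`, every rogue loop in
`A_1^p` has exactly `d` elements, where `d` is the multiplicative order of `2` mod `p`;
in particular every rogue loop has length at most `(p-1)/2`. -/
theorem stmt_14 (p : ℕ) (hp : p.Prime) (hp2 : p ≠ 2)
    (hroot : orderOf (2 : ZMod p) ≠ p - 1)
    (d : ℕ) (hd : d = orderOf (2 : ZMod p))
    (g : ZMod p) (hg0 : g ≠ 0) (hg1 : g ≠ -1)
    (hloop : ∀ n : ℕ, (2 : ZMod p) ^ n * (g + 1) ≠ 1) :
    {x : ZMod p | ∃ n : ℕ, x = 2 ^ n * (g + 1) - 1}.ncard = d ∧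
    d ≤ (p - 1) / 2 := by
  haveI : Fact p.Prime := ⟨hp⟩
  have h2 : (2 : ZMod p) ≠ 0 := by
    intro h
    have h' : ((2 : ℕ) : ZMod p) = 0 := by exact_mod_cast h
    rw [ZMod.natCast_eq_zero_iff] at h'
    exact hp2 ((Nat.prime_dvd_prime_iff_eq hp Nat.prime_two).1 h')
  have hg : g + 1 ≠ 0 := fun h => hg1 (eq_neg_of_add_eq_zero_left h)
  have hpow : (2 : ZMod p) ^ (p - 1) = 1 := ZMod.pow_card_sub_one_eq_one h2
  have hdvd : orderOf (2 : ZMod p) ∣ p - 1 := orderOf_dvd_of_pow_eq_one hpow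
  have hp1 : 0 < p - 1 := by have := hp.two_le; omega
  have hpos : 0 < orderOf (2 : ZMod p) := Nat.pos_of_dvd_of_pos hdvd hp1
  subst hd
  constructor
  · have hset : {x : ZMod p | ∃ n : ℕ, x = 2 ^ n * (g + 1) - 1} =
        (((Finset.range (orderOf (2 : ZMod p))).image
          (fun n : ℕ => (2 : ZMod p) ^ n * (g + 1) - 1) : Finset (ZMod p)) : Set (ZMod p)) := by
      ext x
      simp only [Set.mem_setOf_eq, Finset.coe_image, Set.mem_image, Finset.mem_coe,
        Finset.mem_range]
      constructor
      · rintro ⟨n, rfl⟩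
        exact ⟨n % orderOf (2 : ZMod p), Nat.mod_lt _ hpos, by rw [pow_mod_orderOf]⟩
      · rintro ⟨n, _, rfl⟩
        exact ⟨n, rfl⟩
    rw [hset, Set.ncard_coe_finset, Finset.card_image_of_injOn, Finset.card_range]
    intro a ha b hb hab
    have hab' : (2 : ZMod p) ^ a = 2 ^ b := mul_right_cancel₀ hg (sub_left_injective hab)
    exact pow_injOn_Iio_orderOf (by simpa using ha) (by simpa using hb) hab'
  · obtain ⟨k, hk⟩ := hdvd
    have hk2 : 2 ≤ k := by
      rcases k with _ | _ | k
      · simp at hk; omega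
      · simp at hk; exact absurd hk.symm hroot
      · omega
    rw [Nat.le_div_iff_mul_le (by norm_num), hk]
    exact Nat.mul_le_mul_left _ hk2
end

section
/- Let p be an odd prime with 2 not a primitive root modulo p, and let d be the multiplicative order of 2 modulo p. Then the set of elements lying on rogue loops, {g ∈ ZMod p : g ≠ 0, g ≠ -1, and 2^n(g+1) ≠ 1 for all n ≥ 0}, has exactly (p - 1) - d elements; equivalently, since each rogue loop has exactly d elements, the number of disjoint rogue loops in A_1^p equals (p-1)/d - 1. -/
/-- For an odd prime `p` with `2` not a primitive root mod `p`, the set of elements of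
`A_1^p` lying on rogue loops has exactly `(p - 1) - d` elements, where `d` is the
multiplicative order of `2` mod `p`; since each rogue loop has exactly `d` elements,
the number of disjoint rogue loops is `(p-1)/d - 1`. -/
theorem stmt_15 (p : ℕ) (hp : p.Prime) (hp2 : p ≠ 2)
    (hroot : orderOf (2 : ZMod p) ≠ p - 1)
    (d : ℕ) (hd : d = orderOf (2 : ZMod p)) :
    {g : ZMod p | g ≠ 0 ∧ g ≠ -1 ∧ ∀ n : ℕ, (2 : ZMod p) ^ n * (g + 1) ≠ 1}.ncard
      = (p - 1) - d ∧
    (p - 1) - d = ((p - 1) / d - 1) * d := by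
  haveI : Fact p.Prime := ⟨hp⟩
  have h2 : (2 : ZMod p) ≠ 0 := by
    intro h
    have h' : ((2 : ℕ) : ZMod p) = 0 := by exact_mod_cast h
    rw [ZMod.natCast_eq_zero_iff] at h'
    exact hp2 ((Nat.prime_dvd_prime_iff_eq hp Nat.prime_two).1 h')
  have hdvd : d ∣ p - 1 := hd ▸ ZMod.orderOf_dvd_card_sub_one h2
  have hp1 : 0 < p - 1 := by have := hp.two_le; omega
  have hd0 : 0 < d := Nat.pos_of_dvd_of_pos hdvd hp1
  have hpow : (2 : ZMod p) ^ d = 1 := hd ▸ pow_orderOf_eq_one _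
  refine ⟨?_, ?_⟩
  · classical
    have hS : {g : ZMod p | g ≠ 0 ∧ g ≠ -1 ∧ ∀ n : ℕ, (2 : ZMod p) ^ n * (g + 1) ≠ 1}
        = ((insert (-1 : ZMod p) ((Finset.range d).image fun k => (2 : ZMod p) ^ k - 1))ᶜ :
          Finset (ZMod p)) := by
      ext g
      simp only [Set.mem_setOf_eq, Finset.coe_compl, Set.mem_compl_iff, Finset.mem_coe,
        Finset.mem_insert, Finset.mem_image, Finset.mem_range, not_or, not_exists, not_and]
      constructor
      · rintro ⟨-, h1, h⟩
        refine ⟨h1, fun k hk hg => h (d - k) ?_⟩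
        rw [← hg, sub_add_cancel, ← pow_add, Nat.sub_add_cancel hk.le, hpow]
      · rintro ⟨h1, h⟩
        have key : ∀ n : ℕ, (2 : ZMod p) ^ n * (g + 1) ≠ 1 := by
          intro n hn
          have hlt : n % d < d := Nat.mod_lt _ hd0
          have hn' : (2 : ZMod p) ^ (n % d) * (g + 1) = 1 := by
            rw [hd, pow_mod_orderOf]; exact hn
          have h3 : (2 : ZMod p) ^ (n % d) * (2 : ZMod p) ^ (d - n % d) = 1 := by
            rw [← pow_add, Nat.add_sub_cancel' hlt.le, hpow]
          have h4 : (2 : ZMod p) ^ (d - n % d) = g + 1 :=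
            mul_left_cancel₀ (pow_ne_zero _ h2) (h3.trans hn'.symm)
          refine h ((d - n % d) % d) (Nat.mod_lt _ hd0) ?_
          have h5 : (2 : ZMod p) ^ ((d - n % d) % d) = (2 : ZMod p) ^ (d - n % d) := by
            conv_lhs => rw [hd, pow_mod_orderOf]
            rw [hd]
          rw [h5, h4, add_sub_cancel_right]
        refine ⟨fun h0 => key 0 ?_, h1, key⟩
        simp [h0]
    rw [hS, Set.ncard_coe_finset, Finset.card_compl, Finset.card_insert_of_notMem,
      Finset.card_image_of_injOn, Finset.card_range, ZMod.card]
    · omega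
    · intro a ha b hb hab
      have hab' : (2 : ZMod p) ^ a = (2 : ZMod p) ^ b := sub_left_injective hab
      have ha' : a < d := by simpa using ha
      have hb' : b < d := by simpa using hb
      exact pow_injOn_Iio_orderOf (hd ▸ ha') (hd ▸ hb') hab'
    · simp only [Finset.mem_image, not_exists, not_and]
      intro k _ hk
      apply pow_ne_zero k h2
      linear_combination hk
  · obtain ⟨c, hc⟩ := hdvd
    rw [hc, Nat.mul_div_cancel_left _ hd0, Nat.sub_mul, one_mul, mul_comm]
end

section
/- Let p and q be primes with 2 < q < p such that 2 is not a primitive root modulo q, and suppose p ≡ 2^m - 1 (mod q) for some m ≥ 1 (i.e. p, reduced mod q, lies in the rogue sequence of 1). Then the Cunningham chain of the first kind with base p has length at most (q-3)/2, which is strictly less than (p-3)/2; that is, for every k such that 2^j(p+1) - 1 is prime for all 0 ≤ j < k, one has k ≤ (q-3)/2 < (p-3)/2. -/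
/-- If `2 < q < p` are primes, `2` is not a primitive root modulo `q`, and `p` reduced
mod `q` lies in the rogue sequence of `1` (i.e. `p ≡ 2^m - 1 (mod q)` for some `m ≥ 1`),
then the Cunningham chain of the first kind with base `p` has length at most `(q-3)/2`,
which is strictly less than `(p-3)/2`. -/
theorem stmt_19 (p q : ℕ) (hp : p.Prime) (hq : q.Prime) (hq2 : 2 < q) (hqp : q < p)
    (hroot : orderOf (2 : ZMod q) ≠ q - 1)
    (hm : ∃ m : ℕ, 1 ≤ m ∧ (p : ZMod q) = 2 ^ m - 1) :
    (∀ k : ℕ, (∀ j < k, Nat.Prime (2 ^ j * (p + 1) - 1)) → k ≤ (q - 3) / 2) ∧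
    (q - 3) / 2 < (p - 3) / 2 := by
  have hqo : q % 2 = 1 := hq.eq_two_or_odd.resolve_left (by omega)
  have hpo : p % 2 = 1 := hp.eq_two_or_odd.resolve_left (by omega)
  refine ⟨?_, by omega⟩
  intro k hk
  haveI : Fact q.Prime := ⟨hq⟩
  obtain ⟨m, -, hm⟩ := hm
  have h2 : (2 : ZMod q) ≠ 0 := by
    intro h
    have h' : ((2 : ℕ) : ZMod q) = 0 := by exact_mod_cast h
    rw [ZMod.natCast_eq_zero_iff] at h'
    exact absurd (Nat.le_of_dvd (by norm_num) h') (by omega)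
  have hpow : (2 : ZMod q) ^ (q - 1) = 1 := ZMod.pow_card_sub_one_eq_one h2
  have hd : orderOf (2 : ZMod q) ∣ q - 1 := orderOf_dvd_of_pow_eq_one hpow
  have hd1 : (2 : ZMod q) ^ orderOf (2 : ZMod q) = 1 := pow_orderOf_eq_one _
  have hmod := fun n => pow_mod_orderOf (2 : ZMod q) n
  generalize orderOf (2 : ZMod q) = d at *
  have hdpos : 0 < d := Nat.pos_of_dvd_of_pos hd (by omega)
  have hdle : 2 * d ≤ q - 1 := by
    obtain ⟨c, hc⟩ := hd
    have : 2 ≤ c := by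
      rcases c with _ | _ | c
      · omega
      · omega
      · omega
    rw [hc]; nlinarith
  have hjlt : (d - 1) * m % d < d := Nat.mod_lt _ hdpos
  have hj := hmod ((d - 1) * m)
  generalize (d - 1) * m % d = j at *
  by_contra hcon
  have hpr := hk j (by omega)
  have hge : 1 * (p + 1) ≤ 2 ^ j * (p + 1) := Nat.mul_le_mul_right _ Nat.one_le_two_pow
  have hdvd : q ∣ 2 ^ j * (p + 1) - 1 := by
    rw [← ZMod.natCast_eq_zero_iff, Nat.cast_sub (by omega)]
    push_cast
    rw [hm, hj, sub_add_cancel, ← pow_add]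
    have : (d - 1) * m + m = d * m := by
      obtain ⟨e, rfl⟩ : ∃ e, d = e + 1 := ⟨d - 1, by omega⟩
      simp; ring
    rw [this, pow_mul, hd1, one_pow, sub_self]
  rcases hpr.eq_one_or_self_of_dvd q hdvd with h | h <;> omega
end
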